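/- For all n, k ∈ ℕ, the q-Stirling number of the second kind has the closed form S_q(n+k, n) = (1/(1−q)^k) · Σ_{j=0}^k (−1)^j C(n+k, k−j) binom(n+j, j)_q. (This is the Carlitz-type relation of Equation (18), which the paper re-derives from the negative-order q-Bernoulli numbers via Theorem 5; the indices are normalized so that both sides agree, e.g. for (n,k) = (2,1) both sides equal 2+q.) -/

import Mathlib

/-- The q-analogue `[n]_q = (1 - q^n)/(1 - q)` of a natural number. -/
def qnum {K : Type*} [Field K] (q : K) (n : ℕ) : K := (1 - q ^ n) / (1 - q)

/-- The q-factorial `[n]_q! = ∏_{j=1}^n [j]_q`. -/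
def qfact {K : Type*} [Field K] (q : K) (n : ℕ) : K :=
  ∏ j ∈ Finset.range n, qnum q (j + 1)

/-- The Gaussian binomial coefficient, `0` for `k > n`. -/
def qbinom {K : Type*} [Field K] (q : K) (n k : ℕ) : K :=
  if k ≤ n then qfact q n / (qfact q k * qfact q (n - k)) else 0

/-- The q-Stirling number of the second kind
`S_q(n,k) = (q^{-C(k,2)}/[k]_q!) Σ_{j=0}^k (-1)^j q^{C(j,2)} binom(k,j)_q [k-j]_q^n`. -/
def qStirling2 {K : Type*} [Field K] (q : K) (n k : ℕ) : K :=
  (q ^ Nat.choose k 2)⁻¹ / qfact q k *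
    ∑ j ∈ Finset.range (k + 1),
      (-1 : K) ^ j * q ^ Nat.choose j 2 * qbinom q k j * (qnum q (k - j)) ^ n

/-!
Expand `[n-j]_q^m = (1-q)^{-m} Σ_i (-1)^i C(m,i) q^{i(n-j)}` in the definition of `S_q(m,n)` and
exchange the two sums. By the `q`-binomial theorem
(`prod_range_add_pow_mul`, at `x = q^i` and `y = -1`) the inner sum over `j` is
`∏_{l<n} (q^i - q^l) = (q-1)^n q^{C(n,2)} [n]_q! binom(i,n)_q`, which vanishes for `i < n`; the
remaining indices are `i = n + j` with `0 ≤ j ≤ m - n`.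
-/

section

variable {K : Type*} [Field K] {q : K} {n k : ℕ}

theorem qnum_add (q : K) (m n : ℕ) : qnum q (m + n) = qnum q m + q ^ m * qnum q n := by
  simp only [qnum]
  ring

theorem sub_one_mul_qnum (q : K) (n : ℕ) : (q - 1) * qnum q n = q ^ n - 1 := by
  rcases eq_or_ne q 1 with rfl | hq
  · simp
  · have : 1 - q ≠ 0 := sub_ne_zero.2 hq.symm
    simp only [qnum]
    field_simp
    ring

theorem qfact_zero (q : K) : qfact q 0 = 1 := by
  simp [qfact]

theorem qfact_succ (q : K) (n : ℕ) : qfact q (n + 1) = qfact q n * qnum q (n + 1) :=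
  Finset.prod_range_succ _ _

theorem qfact_ne_zero (hq : ∀ m, 1 ≤ m → m ≤ n → q ^ m ≠ 1) : qfact q n ≠ 0 := by
  refine Finset.prod_ne_zero_iff.2 fun j hj => ?_
  have hjn : j + 1 ≤ n := Finset.mem_range.1 hj
  have hq1 : q ≠ 1 := by simpa using hq 1 le_rfl (by lia)
  exact div_ne_zero (sub_ne_zero.2 (hq (j + 1) (by lia) hjn).symm) (sub_ne_zero.2 hq1.symm)

theorem qfact_ne_zero_of_le (h : qfact q n ≠ 0) (hkn : k ≤ n) : qfact q k ≠ 0 :=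
  ne_zero_of_dvd_ne_zero h (Finset.prod_dvd_prod_of_subset _ _ _ (Finset.range_mono hkn))

theorem qbinom_add_left (q : K) (n k : ℕ) :
    qbinom q (n + k) n = qfact q (n + k) / (qfact q n * qfact q k) := by
  simp [qbinom]

theorem qbinom_add_symm (q : K) (n k : ℕ) : qbinom q (n + k) n = qbinom q (n + k) k := by
  rw [qbinom_add_left, add_comm n k, qbinom_add_left, mul_comm]

theorem qbinom_of_lt (q : K) (h : n < k) : qbinom q n k = 0 :=
  if_neg h.not_ge

theorem qbinom_zero_right (h : qfact q n ≠ 0) : qbinom q n 0 = 1 := by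
  simp [qbinom, qfact_zero, h]

theorem qbinom_self (h : qfact q n ≠ 0) : qbinom q n n = 1 := by
  simp [qbinom, qfact_zero, h]

theorem qbinom_succ_succ (h : qfact q (n + 1) ≠ 0) (k : ℕ) :
    qbinom q (n + 1) (k + 1) = qbinom q n (k + 1) + q ^ (n - k) * qbinom q n k := by
  rcases lt_trichotomy n k with hnk | rfl | hkn
  · simp [qbinom_of_lt, hnk, hnk.trans (Nat.lt_succ_self k)]
  · simp [qbinom_self, qbinom_of_lt, h, qfact_ne_zero_of_le h n.le_succ]
  · obtain ⟨m, rfl⟩ := Nat.exists_eq_add_of_le (Nat.succ_le_of_lt hkn)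
    have hk : qfact q (k + 1) ≠ 0 := qfact_ne_zero_of_le h (by lia)
    have hm : qfact q (m + 1) ≠ 0 := qfact_ne_zero_of_le h (by lia)
    have hsub : k + 1 + m - k = m + 1 := by lia
    have hadd : k + 1 + m + 1 = m + 1 + (k + 1) := by lia
    have htop : qfact q (k + 1 + m + 1) =
        qfact q (k + 1 + m) * (qnum q (m + 1) + q ^ (m + 1) * qnum q (k + 1)) := by
      rw [qfact_succ, hadd, qnum_add]
    rw [qfact_succ] at hk hm
    rw [hsub, add_assoc (k + 1), qbinom_add_left, ← add_assoc, htop, qbinom_add_left,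
      show k + 1 + m = k + (m + 1) by lia, qbinom_add_left, qfact_succ q k, qfact_succ q m]
    obtain ⟨hk, hk'⟩ := mul_ne_zero_iff.1 hk
    obtain ⟨hm, hm'⟩ := mul_ne_zero_iff.1 hm
    field_simp

theorem choose_succ_two (n : ℕ) : (n + 1).choose 2 = n + n.choose 2 := by
  rw [Nat.choose_succ_succ', Nat.choose_one_right]

theorem prod_range_add_pow_mul (h : qfact q n ≠ 0) (x y : K) :
    ∏ l ∈ Finset.range n, (x + q ^ l * y) =
      ∑ j ∈ Finset.range (n + 1), q ^ j.choose 2 * qbinom q n j * y ^ j * x ^ (n - j) := by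
  induction n with
  | zero => simp [qbinom_self h]
  | succ n ih =>
    have hn : qfact q n ≠ 0 := qfact_ne_zero_of_le h n.le_succ
    have pascal : ∀ j ∈ Finset.range (n + 1),
        q ^ (j + 1).choose 2 * qbinom q (n + 1) (j + 1) * y ^ (j + 1) * x ^ (n + 1 - (j + 1)) =
          q ^ (j + 1).choose 2 * qbinom q n (j + 1) * y ^ (j + 1) * x ^ (n - j) +
            q ^ n * y * (q ^ j.choose 2 * qbinom q n j * y ^ j * x ^ (n - j)) := by
      intro j hj
      have hpow : q ^ n = q ^ j * q ^ (n - j) := by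
        rw [← pow_add, Nat.add_sub_cancel' (Finset.mem_range_succ_iff.1 hj)]
      rw [qbinom_succ_succ h, choose_succ_two, Nat.add_sub_add_right, hpow]
      ring
    have shift : x * ∑ j ∈ Finset.range (n + 1),
          q ^ j.choose 2 * qbinom q n j * y ^ j * x ^ (n - j) =
        ∑ j ∈ Finset.range (n + 1),
          q ^ (j + 1).choose 2 * qbinom q n (j + 1) * y ^ (j + 1) * x ^ (n - j) + x ^ (n + 1) := by
      rw [Finset.sum_range_succ', Finset.sum_range_succ, qbinom_of_lt q n.lt_succ_self, mul_add,
        Finset.mul_sum]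
      congr 1
      · rw [mul_zero, zero_mul, zero_mul, add_zero]
        refine Finset.sum_congr rfl fun j hj => ?_
        rw [show n - j = n - (j + 1) + 1 by have := Finset.mem_range.1 hj; lia]
        ring
      · simp [qbinom_zero_right hn, pow_succ']
    rw [Finset.prod_range_succ, ih hn, Finset.sum_range_succ' _ (n + 1),
      Finset.sum_congr rfl pascal, Finset.sum_add_distrib, ← Finset.mul_sum]
    simp only [Nat.choose_zero_succ, pow_zero, qbinom_zero_right h, Nat.sub_zero, one_mul]
    linear_combination shift

theorem prod_range_pow_sub_pow_mul_qfact (q : K) (n k : ℕ) :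
    (∏ l ∈ Finset.range n, (q ^ (n + k) - q ^ l)) * qfact q k =
      (q - 1) ^ n * q ^ n.choose 2 * qfact q (n + k) := by
  induction n with
  | zero => simp
  | succ n ih =>
    have factor : ∀ l ∈ Finset.range n,
        q ^ (n + 1 + k) - q ^ (l + 1) = q * (q ^ (n + k) - q ^ l) := fun l _ => by ring
    have last : q ^ (n + 1 + k) - q ^ 0 = (q - 1) * qnum q (n + k + 1) := by
      rw [sub_one_mul_qnum, pow_zero, add_right_comm]
    rw [Finset.prod_range_succ', Finset.prod_congr rfl factor, Finset.prod_mul_distrib,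
      Finset.prod_const, Finset.card_range, last, choose_succ_two, add_right_comm n 1 k,
      qfact_succ]
    linear_combination q ^ n * (q - 1) * qnum q (n + k + 1) * ih

theorem prod_range_pow_sub_pow {i : ℕ} (hn : qfact q n ≠ 0) (hi : qfact q (i - n) ≠ 0) :
    ∏ l ∈ Finset.range n, (q ^ i - q ^ l) =
      (q - 1) ^ n * q ^ n.choose 2 * qfact q n * qbinom q i n := by
  rcases lt_or_ge i n with hin | hni
  · rw [qbinom_of_lt q hin, mul_zero]
    exact Finset.prod_eq_zero (Finset.mem_range.2 hin) (sub_self _)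
  · obtain ⟨k, rfl⟩ := Nat.exists_eq_add_of_le hni
    rw [Nat.add_sub_cancel_left] at hi
    rw [qbinom_add_left, eq_div_of_mul_eq hi (prod_range_pow_sub_pow_mul_qfact q n k)]
    field_simp

theorem qnum_pow_eq_sum (q : K) (a m : ℕ) :
    qnum q a ^ m =
      (∑ i ∈ Finset.range (m + 1), (-1) ^ i * (m.choose i : K) * (q ^ i) ^ a) / (1 - q) ^ m := by
  rw [qnum, div_pow, sub_eq_neg_add, add_pow]
  congr 1
  refine Finset.sum_congr rfl fun i _ => ?_
  rw [neg_pow, one_pow, pow_right_comm]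
  ring

theorem sum_qbinom_mul_qnum_pow (h : qfact q n ≠ 0) (m : ℕ) :
    ∑ j ∈ Finset.range (n + 1),
        (-1) ^ j * q ^ j.choose 2 * qbinom q n j * qnum q (n - j) ^ m =
      (∑ i ∈ Finset.range (m + 1),
        (-1) ^ i * (m.choose i : K) * ∏ l ∈ Finset.range n, (q ^ i - q ^ l)) / (1 - q) ^ m := by
  have gauss (x : K) : ∏ l ∈ Finset.range n, (x - q ^ l) = ∑ j ∈ Finset.range (n + 1),
      q ^ j.choose 2 * qbinom q n j * (-1) ^ j * x ^ (n - j) := by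
    simpa [sub_eq_add_neg] using prod_range_add_pow_mul h x (-1)
  simp only [qnum_pow_eq_sum, gauss, mul_div_assoc', ← Finset.sum_div, Finset.mul_sum]
  rw [Finset.sum_comm]
  congr! 3
  ring

theorem qStirling2_eq_sum_choose_mul_qbinom {m : ℕ} (hq0 : q ≠ 0) (hn : qfact q n ≠ 0)
    (hmn : qfact q (m - n) ≠ 0) :
    qStirling2 q m n = (q - 1) ^ n / (1 - q) ^ m *
      ∑ i ∈ Finset.range (m + 1), (-1) ^ i * (m.choose i : K) * qbinom q i n := by
  have eval : ∀ i ∈ Finset.range (m + 1),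
      (-1) ^ i * (m.choose i : K) * ∏ l ∈ Finset.range n, (q ^ i - q ^ l) =
        (q - 1) ^ n * q ^ n.choose 2 * qfact q n *
          ((-1) ^ i * (m.choose i : K) * qbinom q i n) := by
    intro i hi
    have him : i - n ≤ m - n := Nat.sub_le_sub_right (Finset.mem_range_succ_iff.1 hi) n
    rw [prod_range_pow_sub_pow hn (qfact_ne_zero_of_le hmn him)]
    ring
  rw [qStirling2, sum_qbinom_mul_qnum_pow hn, Finset.sum_congr rfl eval, ← Finset.mul_sum]
  field_simp

theorem sum_choose_mul_qbinom_add (q : K) (n k : ℕ) :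
    ∑ i ∈ Finset.range (n + k + 1), (-1) ^ i * ((n + k).choose i : K) * qbinom q i n =
      (-1) ^ n * ∑ j ∈ Finset.range (k + 1),
        (-1) ^ j * ((n + k).choose (k - j) : K) * qbinom q (n + j) j := by
  have low : ∀ i ∈ Finset.range n, (-1) ^ i * ((n + k).choose i : K) * qbinom q i n = 0 :=
    fun i hi => by rw [qbinom_of_lt q (Finset.mem_range.1 hi), mul_zero]
  rw [add_assoc, Finset.sum_range_add, Finset.sum_eq_zero low, zero_add, Finset.mul_sum]
  refine Finset.sum_congr rfl fun j hj => ?_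
  have hjk : j ≤ k := Finset.mem_range_succ_iff.1 hj
  rw [qbinom_add_symm, Nat.choose_symm_of_eq_add (show n + k = n + j + (k - j) by lia)]
  ring

/-- Since `qnum 1 j = 0 / 0 = 0`, a nonzero `[n]_q!` with `n ≥ 1` excludes `q = 1`. -/
theorem one_sub_pow_ne_zero_of_qfact_ne_zero (h : qfact q n ≠ 0) : (1 - q) ^ n ≠ 0 := by
  rcases n with _ | n
  · simp
  · refine pow_ne_zero _ fun hq => h ?_
    simp [qfact_succ, qnum, hq]

theorem qStirling2_carlitz_relation_general (hq0 : q ≠ 0)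
    (hq : ∀ m, 1 ≤ m → m ≤ max n k → q ^ m ≠ 1) :
    qStirling2 q (n + k) n = (1 / (1 - q) ^ k) * ∑ j ∈ Finset.range (k + 1),
      (-1 : K) ^ j * (Nat.choose (n + k) (k - j) : K) * qbinom q (n + j) j := by
  have hmax : qfact q (max n k) ≠ 0 := qfact_ne_zero hq
  have hn : qfact q n ≠ 0 := qfact_ne_zero_of_le hmax (le_max_left n k)
  have hk : qfact q (n + k - n) ≠ 0 := qfact_ne_zero_of_le hmax (by lia)
  have hpow : (1 - q) ^ n ≠ 0 := one_sub_pow_ne_zero_of_qfact_ne_zero hn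
  have hsign : (q - 1) ^ n * (-1) ^ n = (1 - q) ^ n := by rw [← mul_pow]; ring
  rw [qStirling2_eq_sum_choose_mul_qbinom hq0 hn hk, sum_choose_mul_qbinom_add, ← mul_assoc,
    div_mul_eq_mul_div, hsign, pow_add, ← div_div, div_self hpow]

end

/-- **Equation (18)** (Carlitz-type relation, indices normalized):
`S_q(n+k,n) = (1/(1-q)^k) Σ_{j=0}^k (-1)^j C(n+k,k-j) binom(n+j,j)_q`. -/
theorem qStirling2_carlitz_relation
    {K : Type*} [Field K] [CharZero K] (q : K) (hq0 : q ≠ 0)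
    (hq : ∀ n : ℕ, 1 ≤ n → q ^ n ≠ 1) (n k : ℕ) :
    qStirling2 q (n + k) n = (1 / (1 - q) ^ k) * ∑ j ∈ Finset.range (k + 1),
      (-1 : K) ^ j * (Nat.choose (n + k) (k - j) : K) * qbinom q (n + j) j :=
  qStirling2_carlitz_relation_general hq0 fun m hm _ => hq m hm
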